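/- arXiv:2310.09451 — 4 statements merged into one kernel-verified Lean document; each statement's English description precedes it below -/
import Mathlib

section
/- Let $G$ be a surjunctive group and let $K$ be a field. Then the group ring $K[G]$ is stably finite, i.e., for every integer $d \geq 1$ and all $d \times d$ matrices $A, B$ with entries in $K[G]$, if $AB = 1$ then $BA = 1$. -/
/-!
For a finite ring `R`, the group ring `R[G]` acts faithfully on the configurations `G → R` by
`(a • x) h = ∑ g, a g * x (h * g)`, and a square matrix over `R[G]` acts on tuples of configurations
as a cellular automaton. If `A * B = 1`, the automaton of `B` has a left inverse, so by
surjunctivity it is bijective with inverse the automaton of `A`, whence `B * A = 1`.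

Stable finiteness is inherited from finitely generated subrings of the coefficients, and by any
ring whose nonzero elements are detected by homomorphisms to stably finite rings. So it only remains
to see that a finitely generated commutative ring `S` is residually finite. Given `c ≠ 0` in `S`,
let `m` be a maximal ideal containing the annihilator of `c`. By Krull's intersection theorem
`c ∉ m ^ n` for some `n`, and `S ⧸ m ^ n` is finite because the field `S ⧸ m` is: by the
Nullstellensatz over the Jacobson ring `ℤ`, it is a finitely generated abelian group, and a field
integral over `ℤ` cannot contain `ℤ`, so it is torsion.
-/

/-- A ring `R` is stably finite if for every `d ≥ 1` and all `d × d` matrices `A B` over `R`,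
`A * B = 1` implies `B * A = 1`. -/
def IsStablyFinite (R : Type*) [Ring R] : Prop :=
  ∀ d : ℕ, 1 ≤ d → ∀ A B : Matrix (Fin d) (Fin d) R, A * B = 1 → B * A = 1

/-- A group `G` is surjunctive if for every finite set `A`, every injective `G`-equivariant
map `τ : A^G → A^G` which is continuous for the prodiscrete topology is surjective. -/
def Surjunctive (G : Type*) [Group G] : Prop :=
  ∀ (A : Type) [Finite A] (τ : (G → A) → (G → A)),
    Function.Injective τ →
    (∀ (g : G) (x : G → A), τ (fun h => x (g * h)) = fun h => τ x (g * h)) →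
    @Continuous (G → A) (G → A)
      (@Pi.topologicalSpace G (fun _ => A) fun _ => ⊥)
      (@Pi.topologicalSpace G (fun _ => A) fun _ => ⊥) τ →
    Function.Surjective τ

section StablyFinite

variable {R : Type*} [Ring R]

lemma IsStablyFinite.of_separating
    (h : ∀ r : R, r ≠ 0 → ∃ (S : Type*) (_ : Ring S) (f : R →+* S), IsStablyFinite S ∧ f r ≠ 0) :
    IsStablyFinite R := by
  intro d hd A B hAB
  rw [← sub_eq_zero]
  ext i j
  by_contra hne
  obtain ⟨S, _, f, hS, hf⟩ := h _ hne
  have hfAB : f.mapMatrix A * f.mapMatrix B = 1 := by rw [← map_mul, hAB, map_one]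
  have hfBA : f.mapMatrix (B * A - 1) = 0 := by
    rw [map_sub, map_mul, map_one, hS d hd _ _ hfAB, sub_self]
  exact hf (congrFun (congrFun hfBA i) j)

lemma IsStablyFinite.of_forall_finite_subset_range
    (h : ∀ s : Set R, s.Finite → ∃ (S : Type*) (_ : Ring S) (f : S →+* R),
      Function.Injective f ∧ s ⊆ Set.range f ∧ IsStablyFinite S) :
    IsStablyFinite R := by
  intro d hd A B hAB
  let entries (M : Matrix (Fin d) (Fin d) R) : Set R := Set.range fun p : Fin d × Fin d => M p.1 p.2
  obtain ⟨S, _, f, hf, hs, hS⟩ :=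
    h (entries A ∪ entries B) ((Set.finite_range _).union (Set.finite_range _))
  have exists_lift : ∀ M, entries M ⊆ Set.range f → ∃ M', f.mapMatrix M' = M := by
    intro M hM
    choose M' hM' using fun i j => hM ⟨(i, j), rfl⟩
    exact ⟨Matrix.of M', Matrix.ext hM'⟩
  obtain ⟨A', rfl⟩ := exists_lift A (Set.subset_union_left.trans hs)
  obtain ⟨B', rfl⟩ := exists_lift B (Set.subset_union_right.trans hs)
  have hAB' : A' * B' = 1 := Matrix.map_injective hf (by simpa using hAB)
  rw [← map_mul, hS d hd A' B' hAB', map_one]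

end StablyFinite

section Convolution

/-- The action of `G` on configurations `G → M` by right translations of the argument; it commutes
with left translations. -/
def rightTranslation (M G : Type*) [AddMonoid M] [Monoid G] : G →* AddMonoid.End (G → M) where
  toFun g :=
    { toFun x h := x (h * g)
      map_zero' := rfl
      map_add' _ _ := rfl }
  map_one' := AddMonoidHom.ext fun x => funext fun h => congrArg x (mul_one h)
  map_mul' g k := AddMonoidHom.ext fun x => funext fun h => congrArg x (mul_assoc h g k).symm

variable (R G : Type*) [Semiring R] [Monoid G]

/-- The action of the group ring on configurations, `(a • x) h = ∑ g, a g * x (h * g)`. Since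
`R` need not be commutative, it is only additive, not `R`-linear. -/
noncomputable def convolutionAction : MonoidAlgebra R G →+* AddMonoid.End (G → R) :=
  MonoidAlgebra.liftNCRingHom (Module.toAddMonoidEnd R (G → R)) (rightTranslation R G)
    fun _ _ => (commute_iff_eq _ _).2 rfl

variable {R G}

lemma convolutionAction_single (g : G) (r : R) (x : G → R) (h : G) :
    convolutionAction R G (MonoidAlgebra.single g r) x h = r * x (h * g) := by
  rw [convolutionAction, MonoidAlgebra.liftNCRingHom_single]
  rfl

lemma convolutionAction_apply (a : MonoidAlgebra R G) (x : G → R) (h : G) :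
    convolutionAction R G a x h = ∑ g ∈ a.coeff.support, a.coeff g * x (h * g) := by
  conv_lhs => rw [← MonoidAlgebra.sum_coeff_single a, Finsupp.sum, map_sum]
  rw [← AddMonoid.End.smul_def, Finset.sum_smul, Finset.sum_apply]
  exact Finset.sum_congr rfl fun g _ => convolutionAction_single g (a.coeff g) x h

lemma convolutionAction_injective : Function.Injective (convolutionAction R G) := by
  classical
  intro a b hab
  ext g
  -- The coefficient of `a` at `g` is the value at `1` of `a` acting on the indicator of `g`.
  have coeff_eq (c : MonoidAlgebra R G) :
      convolutionAction R G c (Pi.single g 1) 1 = c.coeff g := by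
    simp [convolutionAction_apply, Pi.single_apply, eq_comm]
  rw [← coeff_eq a, hab, coeff_eq b]

lemma convolutionAction_comp_mul_left (a : MonoidAlgebra R G) (x : G → R) (g : G) :
    convolutionAction R G a (fun h => x (g * h)) = fun h => convolutionAction R G a x (g * h) := by
  funext h
  simp only [convolutionAction_apply, mul_assoc]

lemma continuous_convolutionAction [TopologicalSpace R] [IsTopologicalSemiring R]
    (a : MonoidAlgebra R G) : Continuous (convolutionAction R G a) := by
  refine continuous_pi fun h => ?_
  simp only [convolutionAction_apply]
  fun_prop

end Convolution

section MatrixAutomaton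

open scoped Matrix.Module

variable (R G n : Type*) [Ring R] [Monoid G] [Fintype n] [DecidableEq n]

/-- The cellular automaton of a matrix over the group ring. A configuration with alphabet `n → R`
is encoded as the family `n → G → R` of its coordinates. -/
noncomputable def matrixAutomaton :
    Matrix n n (MonoidAlgebra R G) →+* AddMonoid.End (n → G → R) :=
  (Module.toAddMonoidEnd (Matrix n n (AddMonoid.End (G → R))) (n → G → R)).comp
    (convolutionAction R G).mapMatrix

variable {R G n}

lemma matrixAutomaton_apply (M : Matrix n n (MonoidAlgebra R G)) (x : n → G → R) (i : n) :
    matrixAutomaton R G n M x i = ∑ j, convolutionAction R G (M i j) (x j) :=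
  rfl

lemma matrixAutomaton_injective : Function.Injective (matrixAutomaton R G n) := by
  intro M N hMN
  refine Matrix.ext fun i j => ?_
  refine convolutionAction_injective (AddMonoid.End.ext _ fun x => ?_)
  have entry_apply (P : Matrix n n (MonoidAlgebra R G)) :
      matrixAutomaton R G n P (Pi.single j x) i = convolutionAction R G (P i j) x := by
    rw [matrixAutomaton_apply, Fintype.sum_eq_single j fun k hk => by simp [hk], Pi.single_eq_same]
  rw [← entry_apply M, hMN, entry_apply N]

lemma matrixAutomaton_comp_mul_left (M : Matrix n n (MonoidAlgebra R G)) (x : n → G → R) (g : G) :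
    matrixAutomaton R G n M (fun i h => x i (g * h)) =
      fun i h => matrixAutomaton R G n M x i (g * h) := by
  funext i h
  simp only [matrixAutomaton_apply, convolutionAction_comp_mul_left, Finset.sum_apply]

lemma continuous_matrixAutomaton [TopologicalSpace R] [IsTopologicalSemiring R]
    (M : Matrix n n (MonoidAlgebra R G)) : Continuous (matrixAutomaton R G n M) :=
  continuous_pi fun i => continuous_finsetSum _ fun j _ =>
    (continuous_convolutionAction (M i j)).comp (continuous_apply j)

end MatrixAutomaton

namespace Surjunctive

variable {G : Type*} [Group G]

-- The definition only quantifies over alphabets in `Type`.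
lemma surjective_of_injective (hG : Surjunctive G) {A : Type*} [Finite A] [TopologicalSpace A]
    [DiscreteTopology A] {τ : (G → A) → (G → A)} (hinj : Function.Injective τ)
    (hτ : ∀ (g : G) (x : G → A), τ (fun h => x (g * h)) = fun h => τ x (g * h))
    (hcont : Continuous τ) : Function.Surjective τ := by
  obtain ⟨k, ⟨e⟩⟩ := Finite.exists_equiv_fin A
  let Φ : (G → A) ≃ₜ (G → Fin k) := .piCongrRight fun _ => e.toHomeomorphOfDiscrete
  have hsurj : Function.Surjective (Φ ∘ τ ∘ Φ.symm) := by
    refine hG (Fin k) _ (Φ.injective.comp (hinj.comp Φ.symm.injective)) (fun g x => ?_)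
      (Φ.continuous.comp (hcont.comp Φ.symm.continuous))
    exact congrArg Φ (hτ g (Φ.symm x))
  simpa using hsurj

lemma matrixAutomaton_surjective (hG : Surjunctive G) {R n : Type*} [Ring R] [Finite R]
    [Fintype n] [DecidableEq n] {M : Matrix n n (MonoidAlgebra R G)}
    (hM : Function.Injective (matrixAutomaton R G n M)) :
    Function.Surjective (matrixAutomaton R G n M) := by
  let : TopologicalSpace R := ⊥
  have : DiscreteTopology R := ⟨rfl⟩
  let Φ : (G → n → R) ≃ (n → G → R) := Equiv.piComm _
  have hsurj : Function.Surjective (Φ.symm ∘ matrixAutomaton R G n M ∘ Φ) := by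
    refine hG.surjective_of_injective (Φ.symm.injective.comp (hM.comp Φ.injective))
      (fun g x => ?_) ?_
    · exact congrArg Φ.symm (matrixAutomaton_comp_mul_left M (Φ x) g)
    · have hΦ : Continuous fun (x : G → n → R) i h => x h i := by fun_prop
      have hΦ' : Continuous fun (x : n → G → R) h i => x i h := by fun_prop
      exact hΦ'.comp ((continuous_matrixAutomaton M).comp hΦ)
  simpa using hsurj

lemma isStablyFinite_of_finite (hG : Surjunctive G) (R : Type*) [Ring R] [Finite R] :
    IsStablyFinite (MonoidAlgebra R G) := by
  intro d _ A B hAB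
  let τ := matrixAutomaton R G (Fin d)
  have hleft : Function.LeftInverse (τ A) (τ B) := fun x => by
    have hτ : τ A * τ B = 1 := by rw [← map_mul, hAB, map_one]
    exact DFunLike.congr_fun hτ x
  have hright : Function.RightInverse (τ A) (τ B) :=
    hleft.rightInverse_of_surjective (hG.matrixAutomaton_surjective hleft.injective)
  refine matrixAutomaton_injective (AddMonoid.End.ext _ fun x => ?_)
  rw [map_mul, map_one]
  exact hright x

end Surjunctive

section ResiduallyFinite

lemma isJacobsonRing_of_jacobson_bot {R : Type*} [CommRing R] [Ring.DimensionLEOne R]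
    (h : (⊥ : Ideal R).jacobson = ⊥) : IsJacobsonRing R := by
  rw [isJacobsonRing_iff_prime_eq]
  intro P hP
  obtain rfl | hbot := eq_or_ne P ⊥
  · exact h
  · have := hP.isMaximal hbot
    exact Ideal.jacobson_eq_self_of_isMaximal

lemma isJacobsonRing_int : IsJacobsonRing ℤ := by
  refine isJacobsonRing_of_jacobson_bot (eq_bot_iff.2 fun x hx => ?_)
  rw [Ideal.mem_bot]
  have hunit : IsUnit (x * x + 1) := Ideal.mem_jacobson_bot.1 hx x
  rcases Int.isUnit_iff.1 hunit with h | h <;> nlinarith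

-- The `ℤ`-algebra structure is arbitrary because the one inherited by a quotient of a
-- `ℤ`-subalgebra is not definitionally the canonical one.
lemma finite_of_finiteType_int (F : Type*) [Field F] [Algebra ℤ F] [Algebra.FiniteType ℤ F] :
    Finite F := by
  obtain rfl : ‹Algebra ℤ F› = Ring.toIntAlgebra F := Subsingleton.elim _ _
  have := isJacobsonRing_int
  have : Module.Finite ℤ F := finite_of_finite_type_of_isJacobsonRing ℤ F
  have hker : ¬Function.Injective (algebraMap ℤ F) := fun h =>
    Int.not_isField (isField_of_isIntegral_of_isField h (Field.toIsField F))
  obtain ⟨n, hn, hn0⟩ : ∃ n : ℤ, algebraMap ℤ F n = 0 ∧ n ≠ 0 := by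
    rw [injective_iff_map_eq_zero] at hker
    push Not at hker
    exact hker
  refine Module.finite_of_fg_torsion F fun x => ?_
  exact ⟨⟨n, mem_nonZeroDivisors_of_ne_zero hn0⟩, by
    rw [Submonoid.mk_smul, Algebra.smul_def, hn, zero_mul]⟩

lemma exists_isMaximal_pow_notMem {R : Type*} [CommRing R] [IsNoetherianRing R] {c : R}
    (hc : c ≠ 0) : ∃ m : Ideal R, m.IsMaximal ∧ ∃ n : ℕ, c ∉ m ^ n := by
  obtain ⟨m, hm, hann⟩ := Ideal.exists_le_maximal (Ideal.torsionOf R R c)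
    (mt (Ideal.torsionOf_eq_top_iff R c).1 hc)
  refine ⟨m, hm, ?_⟩
  by_contra! hmem
  obtain ⟨r, hr⟩ := (m.mem_iInf_smul_pow_eq_bot_iff c).1 (by simpa using hmem)
  have hsub : 1 - (r : R) ∈ m := hann <| by
    rw [Ideal.mem_torsionOf_iff, sub_smul, one_smul, hr, sub_self]
  exact hm.ne_top ((Ideal.eq_top_iff_one m).2 (by simpa using add_mem hsub r.2))

lemma exists_finite_quotient_notMem {R : Type*} [CommRing R] [Algebra ℤ R]
    [Algebra.FiniteType ℤ R] {c : R} (hc : c ≠ 0) : ∃ I : Ideal R, Finite (R ⧸ I) ∧ c ∉ I := by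
  have : IsNoetherianRing R := Algebra.FiniteType.isNoetherianRing ℤ R
  obtain ⟨m, hm, n, hcn⟩ := exists_isMaximal_pow_notMem hc
  let := Ideal.Quotient.field m
  have : Finite (R ⧸ m) := finite_of_finiteType_int (R ⧸ m)
  exact ⟨m ^ n, Ideal.finite_quotient_pow (IsNoetherian.noetherian m) n, hcn⟩

end ResiduallyFinite

lemma exists_finiteType_subset_range_mapRingHom (R : Type*) {K G : Type*} [CommSemiring R]
    [CommSemiring K] [Algebra R K] [Monoid G] {s : Set (MonoidAlgebra K G)} (hs : s.Finite) :
    ∃ S : Subalgebra R K, Algebra.FiniteType R S ∧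
      s ⊆ Set.range (MonoidAlgebra.mapRingHom G (algebraMap S K)) := by
  let coeffs : Set K := ⋃ a ∈ s, Set.range a.coeff
  have hcoeffs : coeffs.Finite := hs.biUnion fun a _ => a.coeff.finite_range
  refine ⟨Algebra.adjoin R coeffs, .adjoin_of_finite hcoeffs, fun a ha => ?_⟩
  refine (MonoidAlgebra.range_map _).superset fun g => ?_
  exact ⟨⟨a.coeff g, Algebra.subset_adjoin (Set.mem_biUnion ha ⟨g, rfl⟩)⟩, rfl⟩

lemma Surjunctive.isStablyFinite_of_finiteType_int {G : Type*} [Group G] (hG : Surjunctive G)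
    (S : Type*) [CommRing S] [Algebra ℤ S] [Algebra.FiniteType ℤ S] :
    IsStablyFinite (MonoidAlgebra S G) := by
  refine .of_separating fun a ha => ?_
  obtain ⟨g, hg⟩ : ∃ g, a.coeff g ≠ 0 := by
    by_contra! h
    exact ha (MonoidAlgebra.ext (Finsupp.ext h))
  obtain ⟨I, _, hI⟩ := exists_finite_quotient_notMem hg
  refine ⟨_, _, MonoidAlgebra.mapRingHom G (Ideal.Quotient.mk I),
    hG.isStablyFinite_of_finite (S ⧸ I), fun h => hI ?_⟩
  rw [← Ideal.Quotient.eq_zero_iff_mem, ← MonoidAlgebra.coeff_mapRingHom, h]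
  rfl

theorem surjunctive_group_ring_stably_finite_general {G : Type*} [Group G] (hG : Surjunctive G)
    (K : Type*) [CommRing K] : IsStablyFinite (MonoidAlgebra K G) := by
  refine .of_forall_finite_subset_range fun s hs => ?_
  obtain ⟨S, _, hsS⟩ := exists_finiteType_subset_range_mapRingHom ℤ hs
  exact ⟨_, _, MonoidAlgebra.mapRingHom G (algebraMap S K),
    MonoidAlgebra.map_injective (algebraMap S K : S →+ K) Subtype.val_injective, hsS,
    hG.isStablyFinite_of_finiteType_int S⟩

theorem surjunctive_group_ring_stably_finite {G : Type*} [Group G] (hG : Surjunctive G)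
    (K : Type*) [Field K] : IsStablyFinite (MonoidAlgebra K G) :=
  surjunctive_group_ring_stably_finite_general hG K
end

section
/- Let $G$ be a group and let $K$ be a field. Then the group ring $K[G]$ is stably finite if and only if, for every finite-dimensional vector space $V$ over $K$, every injective $K$-linear map $\tau \colon V^G \to V^G$ that is $G$-equivariant (i.e., $\tau(x \circ L_g) = \tau(x) \circ L_g$ for all $g \in G$ and $x \in V^G$, where $L_g$ is left multiplication by $g$) and continuous with respect to the product topology on $V^G$ (with $V$ discrete) is surjective. -/
open Function Module
open scoped MonoidAlgebra

theorem isStablyFinite_iff_isStablyFiniteRing {R : Type*} [Ring R] :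
    IsStablyFinite R ↔ IsStablyFiniteRing R := by
  simp only [IsStablyFinite, isStablyFiniteRing_iff, isDedekindFiniteMonoid_iff]
  refine ⟨fun h d A B hAB => ?_, fun h d _ A B hAB => h d hAB⟩
  obtain rfl | hd := d.eq_zero_or_pos
  · exact Subsingleton.elim _ _
  · exact h d hd A B hAB

section FiniteDependence

variable {I B : Type*} {A : I → Type*}

theorem continuous_of_dependsOn_finset [∀ i, TopologicalSpace (A i)]
    [∀ i, DiscreteTopology (A i)] [TopologicalSpace B] {f : (∀ i, A i) → B} {F : Finset I}
    (hf : DependsOn f F) : Continuous f := by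
  refine continuous_iff_continuousAt.2 fun x => ?_
  have agree_near : ∀ᶠ y in nhds x, ∀ i ∈ F, x i = y i :=
    (Finset.eventually_all F).2 fun i _ =>
      (continuous_apply i).continuousAt.eventually (by simp [nhds_discrete])
  exact continuousAt_const.congr (agree_near.mono fun y hy => hf hy)

theorem exists_finset_dependsOn_of_continuous [∀ i, AddGroup (A i)] [AddGroup B]
    [∀ i, TopologicalSpace (A i)] [TopologicalSpace B] [DiscreteTopology B]
    {f : (∀ i, A i) →+ B} (hf : Continuous f) : ∃ F : Finset I, DependsOn f F := by
  have kernel_open : IsOpen (f ⁻¹' {0}) := (isOpen_discrete {0}).preimage hf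
  obtain ⟨F, U, hU, hker⟩ := isOpen_pi_iff.1 kernel_open 0 (map_zero f)
  refine ⟨F, fun x y hxy => sub_eq_zero.1 ?_⟩
  rw [← map_sub]
  refine hker fun i hi => ?_
  simpa [hxy i hi] using (hU i hi).2

theorem map_eq_sum_single_of_dependsOn [DecidableEq I] [∀ i, AddCommMonoid (A i)]
    [AddCommMonoid B] {f : (∀ i, A i) →+ B} {F : Finset I} (hf : DependsOn f F) (x : ∀ i, A i) :
    f x = ∑ i ∈ F, f (Pi.single i (x i)) := by
  rw [← map_sum]
  refine hf fun i hi => ?_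
  simp [Finset.sum_apply, Finset.sum_pi_single, Finset.mem_coe.1 hi]

end FiniteDependence

/-- `τ` is a linear cellular automaton over `M` with alphabet the topological module `V`: a
continuous `K`-linear self-map of the space of configurations `M → V` that commutes with the action
of `M` by left translations of the argument. For a discrete alphabet, `M → V` carries the
prodiscrete topology. -/
structure IsLinearCellularAutomaton (K : Type*) [Semiring K] {M V : Type*} [Mul M]
    [AddCommMonoid V] [Module K V] [TopologicalSpace V] (τ : (M → V) → M → V) : Prop where
  isLinearMap : IsLinearMap K τ
  equivariant : ∀ (g : M) (x : M → V), τ (fun h => x (g * h)) = fun h => τ x (g * h)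
  continuous : Continuous τ

section Basis

variable (K M ι : Type*) [Semiring K] [Fintype ι]

/-- The standard `K`-basis of the free module `K[M] ^ ι`, indexed by pairs `(g, i)`: the vector
with the monoid element `g` in position `i` and zero elsewhere. -/
noncomputable def piMonoidAlgebraBasis : Basis (M × ι) K (ι → K[M]) :=
  (Pi.basis fun _ => MonoidAlgebra.basis M K).reindex
    ((Equiv.sigmaEquivProd ι M).trans (Equiv.prodComm ι M))

variable {K M ι} [Monoid M]

theorem piMonoidAlgebraBasis_eq_single_smul (g : M) (i : ι) :
    piMonoidAlgebraBasis K M ι (g, i) =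
      MonoidAlgebra.single g (1 : K) • Pi.basisFun K[M] ι i := by
  classical
  simp [piMonoidAlgebraBasis, Pi.basis_apply, ← Pi.single_smul]

theorem single_smul_piMonoidAlgebraBasis (g h : M) (i : ι) :
    MonoidAlgebra.single g (1 : K) • piMonoidAlgebraBasis K M ι (h, i) =
      piMonoidAlgebraBasis K M ι (g * h, i) := by
  simp [piMonoidAlgebraBasis_eq_single_smul, smul_smul, MonoidAlgebra.single_mul_single]

end Basis

section Duality

variable {K M V ι : Type*} [CommSemiring K] [AddCommMonoid V] [Module K V] [Fintype ι]

/-- The identification of the space of configurations `M → V` with the `K`-dual of `K[M] ^ ι`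
given by a basis `b` of `V`: the functional attached to `x` sends the standard basis vector at
`(g, i)` to the `i`-th coordinate of `x g`. -/
noncomputable def configurationEquivDual (M : Type*) (b : Basis ι K V) :
    (M → V) ≃ₗ[K] Dual K (ι → K[M]) :=
  LinearEquiv.piCongrRight (fun _ => b.equivFun) ≪≫ₗ (LinearEquiv.curry K K M ι).symm ≪≫ₗ
    (piMonoidAlgebraBasis K M ι).constr K

variable (b : Basis ι K V)

@[simp]
theorem configurationEquivDual_basis (x : M → V) (g : M) (i : ι) :
    configurationEquivDual M b x (piMonoidAlgebraBasis K M ι (g, i)) = b.repr (x g) i := by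
  simp [configurationEquivDual]

theorem configurationEquivDual_translate [Monoid M] (x : M → V) (g : M) (m : ι → K[M]) :
    configurationEquivDual M b (fun h => x (g * h)) m =
      configurationEquivDual M b x (MonoidAlgebra.single g (1 : K) • m) := by
  have : configurationEquivDual M b (fun h => x (g * h)) =
      configurationEquivDual M b x ∘ₗ
        DistribSMul.toLinearMap K _ (MonoidAlgebra.single g (1 : K)) :=
    (piMonoidAlgebraBasis K M ι).ext fun ⟨h, i⟩ => by simp [single_smul_piMonoidAlgebraBasis]
  exact LinearMap.congr_fun this m

theorem exists_finset_dependsOn_configurationEquivDual (m : ι → K[M]) :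
    ∃ F : Finset M, DependsOn (fun x : M → V => configurationEquivDual M b x m) F := by
  classical
  refine ⟨((piMonoidAlgebraBasis K M ι).repr m).support.image Prod.fst, fun x y hxy => ?_⟩
  simp only [configurationEquivDual, LinearEquiv.trans_apply, Basis.constr_apply]
  refine Finset.sum_congr rfl fun p hp => ?_
  simp [uncurry, hxy p.1 (Finset.mem_image_of_mem _ hp)]

theorem exists_eq_configurationEquivDual_of_dependsOn {φ : Dual K (M → V)} {F : Finset M}
    (hφ : DependsOn φ F) :
    ∃ m : ι → K[M], ∀ x, φ x = configurationEquivDual M b x m := by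
  classical
  refine ⟨∑ h ∈ F, ∑ i, φ (Pi.single h (b i)) • piMonoidAlgebraBasis K M ι (h, i), fun x => ?_⟩
  have map_single (h : M) (v : V) :
      φ (Pi.single h v) = ∑ i, φ (Pi.single h (b i)) * b.repr v i := by
    have expand := b.sum_dual_apply_smul_coord (φ ∘ₗ LinearMap.single K (fun _ : M => V) h)
    simpa using (LinearMap.congr_fun expand v).symm
  calc φ x = ∑ h ∈ F, φ (Pi.single h (x h)) :=
        map_eq_sum_single_of_dependsOn (f := φ.toAddMonoidHom) hφ x
    _ = ∑ h ∈ F, ∑ i, φ (Pi.single h (b i)) * b.repr (x h) i := by simp only [← map_single]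
    _ = _ := by simp

end Duality

section DualAutomaton

variable {K M V ι : Type*} [CommSemiring K] [Monoid M] [AddCommMonoid V] [Module K V] [Fintype ι]
  (b : Basis ι K V) (f : Module.End K[M] (ι → K[M]))

/-- The linear cellular automaton dual to an endomorphism `f` of `K[M] ^ ι`: the transpose of `f`
read on `M → V` through `configurationEquivDual`. -/
noncomputable def dualAutomaton : Module.End K (M → V) :=
  (configurationEquivDual M b).symm.conj (f.restrictScalars K).dualMap

@[simp]
theorem configurationEquivDual_dualAutomaton (x : M → V) :
    configurationEquivDual M b (dualAutomaton b f x) =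
      (f.restrictScalars K).dualMap (configurationEquivDual M b x) := by
  simp [dualAutomaton, LinearEquiv.conj_apply]

theorem repr_dualAutomaton (x : M → V) (g : M) (i : ι) :
    b.repr (dualAutomaton b f x g) i =
      configurationEquivDual M b x (f (piMonoidAlgebraBasis K M ι (g, i))) := by
  simp [← configurationEquivDual_basis]

theorem dualAutomaton_translate (g : M) (x : M → V) :
    dualAutomaton b f (fun h => x (g * h)) = fun h => dualAutomaton b f x (g * h) := by
  funext h
  refine b.ext_elem fun i => ?_
  rw [repr_dualAutomaton, repr_dualAutomaton, configurationEquivDual_translate, ← map_smul,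
    single_smul_piMonoidAlgebraBasis]

theorem exists_finset_dependsOn_dualAutomaton (g : M) :
    ∃ F : Finset M, DependsOn (fun x => dualAutomaton b f x g) F := by
  classical
  choose F hF using fun i =>
    exists_finset_dependsOn_configurationEquivDual b (f (piMonoidAlgebraBasis K M ι (g, i)))
  refine ⟨Finset.univ.biUnion F, fun x y hxy => b.ext_elem fun i => ?_⟩
  simp only [repr_dualAutomaton]
  exact (hF i).mono (Finset.coe_subset.2 (Finset.subset_biUnion_of_mem F (Finset.mem_univ i))) hxy

theorem isLinearCellularAutomaton_dualAutomaton [TopologicalSpace V] [DiscreteTopology V] :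
    IsLinearCellularAutomaton K (dualAutomaton b f) where
  isLinearMap := (dualAutomaton b f).isLinear
  equivariant := dualAutomaton_translate b f
  continuous := continuous_pi fun g =>
    (exists_finset_dependsOn_dualAutomaton b f g).elim fun _ => continuous_of_dependsOn_finset

end DualAutomaton

theorem IsLinearCellularAutomaton.exists_eq_dualAutomaton {K M V ι : Type*} [CommSemiring K]
    [Monoid M] [AddCommGroup V] [Module K V] [TopologicalSpace V] [DiscreteTopology V] [Fintype ι]
    (b : Basis ι K V) {τ : (M → V) → M → V} (hτ : IsLinearCellularAutomaton K τ) :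
    ∃ f : Module.End K[M] (ι → K[M]), τ = dualAutomaton b f := by
  let evalOne : (M → V) →ₗ[K] V := LinearMap.proj 1 ∘ₗ hτ.isLinearMap.mk' τ
  obtain ⟨F, hF⟩ := exists_finset_dependsOn_of_continuous (f := evalOne.toAddMonoidHom)
    ((continuous_apply 1).comp hτ.continuous)
  choose m hm using fun i => exists_eq_configurationEquivDual_of_dependsOn b (F := F)
    (φ := b.coord i ∘ₗ evalOne) fun x y hxy => congrArg (b.coord i) (hF hxy)
  refine ⟨(Pi.basisFun K[M] ι).constr ℕ m, funext fun x => funext fun g => b.ext_elem fun i => ?_⟩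
  calc b.repr (τ x g) i = b.repr (τ (fun h => x (g * h)) 1) i := by simp [hτ.equivariant]
    _ = configurationEquivDual M b (fun h => x (g * h)) (m i) := hm i _
    _ = configurationEquivDual M b x (MonoidAlgebra.single g (1 : K) • m i) :=
        configurationEquivDual_translate b x g (m i)
    _ = b.repr (dualAutomaton b ((Pi.basisFun K[M] ι).constr ℕ m) x g) i := by
        rw [repr_dualAutomaton, piMonoidAlgebraBasis_eq_single_smul,
          LinearMap.map_smul _ (MonoidAlgebra.single g (1 : K)), Basis.constr_basis]

section Field

variable {K M V ι : Type*} [Field K] [Monoid M] [AddCommMonoid V] [Module K V] [Fintype ι]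
  (b : Basis ι K V) {f : Module.End K[M] (ι → K[M])}

theorem injective_dualAutomaton_iff : Injective (dualAutomaton b f) ↔ Surjective f := by
  simp [dualAutomaton, LinearEquiv.conj_apply, LinearMap.dualMap_injective_iff]

theorem surjective_dualAutomaton_iff : Surjective (dualAutomaton b f) ↔ Injective f := by
  simp [dualAutomaton, LinearEquiv.conj_apply, LinearMap.dualMap_surjective_iff]

end Field

theorem stably_finite_iff_injective_linear_cellular_automata_surjective_general
    {M : Type*} [Monoid M] (K : Type v) [Field K] :
    IsStablyFinite K[M] ↔
      ∀ (V : Type v) [AddCommGroup V] [Module K V] [FiniteDimensional K V]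
        (τ : (M → V) → (M → V)),
        IsLinearMap K τ →
        (∀ (g : M) (x : M → V), τ (fun h => x (g * h)) = fun h => τ x (g * h)) →
        @Continuous (M → V) (M → V)
          (@Pi.topologicalSpace M (fun _ => V) fun _ => ⊥)
          (@Pi.topologicalSpace M (fun _ => V) fun _ => ⊥) τ →
        Injective τ → Surjective τ := by
  rw [isStablyFinite_iff_isStablyFiniteRing, isStablyFiniteRing_iff_injective_of_surjective]
  constructor
  · intro hfin V _ _ _ τ hlin heq hcont hinj
    let _ : TopologicalSpace V := ⊥
    have : DiscreteTopology V := ⟨rfl⟩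
    have b := finBasis K V
    have hτ : IsLinearCellularAutomaton K τ := ⟨hlin, heq, hcont⟩
    obtain ⟨f, rfl⟩ := hτ.exists_eq_dualAutomaton b
    exact (surjective_dualAutomaton_iff b).2 (hfin _ f ((injective_dualAutomaton_iff b).1 hinj))
  · intro hca n f hsurj
    let _ : TopologicalSpace (Fin n → K) := ⊥
    have : DiscreteTopology (Fin n → K) := ⟨rfl⟩
    have b := Pi.basisFun K (Fin n)
    have hτ := isLinearCellularAutomaton_dualAutomaton b f
    exact (surjective_dualAutomaton_iff b).1 (hca _ _ hτ.isLinearMap hτ.equivariant hτ.continuous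
      ((injective_dualAutomaton_iff b).2 hsurj))

theorem stably_finite_iff_injective_linear_cellular_automata_surjective
    {G : Type*} [Group G] (K : Type v) [Field K] :
    IsStablyFinite (MonoidAlgebra K G) ↔
      ∀ (V : Type v) [AddCommGroup V] [Module K V] [FiniteDimensional K V]
        (τ : (G → V) → (G → V)),
        IsLinearMap K τ →
        (∀ (g : G) (x : G → V), τ (fun h => x (g * h)) = fun h => τ x (g * h)) →
        @Continuous (G → V) (G → V)
          (@Pi.topologicalSpace G (fun _ => V) fun _ => ⊥)
          (@Pi.topologicalSpace G (fun _ => V) fun _ => ⊥) τ →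
        Function.Injective τ → Function.Surjective τ :=
  stably_finite_iff_injective_linear_cellular_automata_surjective_general K
end

section
/- Let $G$ be a group and let $K$ and $L$ be fields that are elementarily equivalent as structures in the first-order language of rings. Then the group ring $K[G]$ is stably finite if and only if the group ring $L[G]$ is stably finite. -/
/-!
A quasi-identity of rings is a sentence `∀ x, p₁(x) = 0 ∧ ⋯ ∧ pₘ(x) = 0 → q(x) = 0` with
noncommutative integer polynomials `pᵢ` and `q`. It is a first-order sentence, so elementarily
equivalent rings `K` and `L` satisfy the same quasi-identities. Then so do `K[G]` and `L[G]`: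
finitely many elements of `K[G]` are given by finitely many coefficients in `K`, and a polynomial
in these elements has coefficients that are polynomials in the given ones. Finally, stable
finiteness is a conjunction of quasi-identities, as `A * B = 1` and `B * A = 1` are systems of
polynomial equations in the entries of `A` and `B`.
-/

open FirstOrder

universe u w

theorem map_freeRing_lift {κ R S : Type*} [Ring R] [Ring S] (f : R →+* S) (x : κ → R)
    (p : FreeRing κ) : f (FreeRing.lift x p) = FreeRing.lift (f ∘ x) p := by
  have h : f.comp (FreeRing.lift x) = FreeRing.lift (f ∘ x) :=
    FreeRing.hom_ext fun k => by simp
  exact RingHom.congr_fun h p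

/-- The ring `R` satisfies the quasi-identity `(∀ p ∈ P, p(x) = 0) → q(x) = 0`, where the `p ∈ P`
and `q` are noncommutative integer polynomials in variables indexed by `κ`. -/
def SatisfiesQuasiIdentity (R : Type*) [Ring R] {κ : Type*} (P : Set (FreeRing κ))
    (q : FreeRing κ) : Prop :=
  ∀ x : κ → R, (∀ p ∈ P, FreeRing.lift x p = 0) → FreeRing.lift x q = 0

/-- `S` lies in the quasivariety generated by `R`: it satisfies every quasi-identity (with finitely
many variables and premises) that `R` satisfies. The universe `w` is that of the types indexing the
variables. -/
def MemQuasivariety (R S : Type*) [Ring R] [Ring S] : Prop :=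
  ∀ ⦃κ : Type w⦄ [Finite κ] ⦃P : Set (FreeRing κ)⦄, P.Finite → ∀ q : FreeRing κ,
    SatisfiesQuasiIdentity R P q → SatisfiesQuasiIdentity S P q

section ElementaryEquivalence

open Language Ring

variable {R S : Type*} [Ring R] [Ring S] [CompatibleRing R] [CompatibleRing S]

-- Stated for a pair of rings because a bound variable cannot range over rings in all universes.
theorem exists_term_realize_eq_freeRing_lift {κ : Type*} (p : FreeRing κ) :
    ∃ t : Language.ring.Term κ,
      (∀ x : κ → R, t.realize x = FreeRing.lift x p) ∧
        ∀ x : κ → S, t.realize x = FreeRing.lift x p := by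
  induction p using FreeRing.induction_on with
  | hn1 => exact ⟨-1, by simp⟩
  | hb k => exact ⟨Term.var k, by simp⟩
  | ha p q hp hq =>
    obtain ⟨s, hs⟩ := hp
    obtain ⟨t, ht⟩ := hq
    exact ⟨s + t, by simp [hs, ht]⟩
  | hm p q hp hq =>
    obtain ⟨s, hs⟩ := hp
    obtain ⟨t, ht⟩ := hq
    exact ⟨s * t, by simp [hs, ht]⟩

theorem MemQuasivariety.of_elementarilyEquivalent (h : R ≅[Language.ring] S) :
    MemQuasivariety.{w} R S := by
  intro κ _ P hP q hR
  have := hP.to_subtype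
  choose t htR htS using exists_term_realize_eq_freeRing_lift (R := R) (S := S) (κ := κ)
  let vanishes (p : FreeRing κ) : Language.ring.Formula (Empty ⊕ κ) :=
    ((t p).relabel Sum.inr).equal 0
  let φ : Language.ring.Sentence :=
    Formula.iAlls κ ((Formula.iInf fun p : P => vanishes p).imp (vanishes q))
  have hφ : R ⊨ φ ↔ S ⊨ φ := h.realize_sentence φ
  simp only [φ, vanishes, Sentence.Realize, Formula.realize_iAlls, Formula.realize_imp,
    Formula.realize_iInf, Formula.realize_equal, Term.realize_relabel, realize_zero,
    Sum.elim_comp_inr, htR, htS, Subtype.forall] at hφ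
  exact hφ.1 hR

end ElementaryEquivalence

section MonoidAlgebra

open MonoidAlgebra

variable {R : Type*} {G : Type u} [Ring R] [Monoid G]

theorem exists_mapRingHom_freeRing_lift_comp_eq {κ : Type w} [Finite κ]
    (x : κ → MonoidAlgebra R G) :
    ∃ (ι : Type (max w u)) (_ : Finite ι) (v : ι → R) (X : κ → MonoidAlgebra (FreeRing ι) G),
      mapRingHom G (FreeRing.lift v) ∘ X = x := by
  refine ⟨Σ k, (x k).coeff.support, inferInstance, fun i => (x i.1).coeff i.2,
    fun k => ∑ g : (x k).coeff.support, single (g : G) (FreeRing.of ⟨k, g⟩), funext fun k => ?_⟩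
  simp only [Function.comp_apply, map_sum, mapRingHom_single, FreeRing.lift_of]
  rw [Finset.sum_coe_sort _ (fun g => single g ((x k).coeff g))]
  exact sum_coeff_single (x k)

theorem freeRing_lift_mapRingHom_comp_eq_zero_iff {ι κ : Type*} (v : ι → R)
    (X : κ → MonoidAlgebra (FreeRing ι) G) (p : FreeRing κ) :
    FreeRing.lift (mapRingHom G (FreeRing.lift v) ∘ X) p = 0 ↔
      ∀ g, FreeRing.lift v ((FreeRing.lift X p).coeff g) = 0 := by
  rw [← map_freeRing_lift, MonoidAlgebra.ext_iff, DFunLike.ext_iff]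
  simp

theorem MemQuasivariety.monoidAlgebra {S : Type*} [Ring S] (h : MemQuasivariety.{max w u} R S) :
    MemQuasivariety.{w} (MonoidAlgebra R G) (MonoidAlgebra S G) := by
  intro κ _ P hP q hR x hx
  obtain ⟨ι, _, v, X, rfl⟩ := exists_mapRingHom_freeRing_lift_comp_eq x
  let coeffs (p : FreeRing κ) : G →₀ FreeRing ι := (FreeRing.lift X p).coeff
  have hfin : (⋃ p ∈ P, Set.range (coeffs p)).Finite :=
    hP.biUnion fun p _ => (coeffs p).finite_range
  rw [freeRing_lift_mapRingHom_comp_eq_zero_iff]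
  refine fun g => h hfin (coeffs q g) (fun y hy => ?_) v ?_
  · refine (freeRing_lift_mapRingHom_comp_eq_zero_iff y X q).1 (hR _ fun p hp => ?_) g
    exact (freeRing_lift_mapRingHom_comp_eq_zero_iff y X p).2 fun g =>
      hy _ (Set.mem_biUnion hp (Set.mem_range_self g))
  · intro r hr
    obtain ⟨p, hp, g, rfl⟩ := Set.mem_iUnion₂.1 hr
    exact (freeRing_lift_mapRingHom_comp_eq_zero_iff v X p).1 (hx p hp) g

end MonoidAlgebra

theorem forall_map_mul_sub_one_apply_eq_zero_iff {n R S : Type*} [Fintype n] [DecidableEq n]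
    [Ring R] [Ring S] (f : R →+* S) (A B : Matrix n n R) :
    (∀ i j, f ((A * B - 1) i j) = 0) ↔ f.mapMatrix A * f.mapMatrix B = 1 := by
  rw [← sub_eq_zero, ← map_mul, ← map_one f.mapMatrix, ← map_sub, ← Matrix.ext_iff]
  rfl

theorem IsStablyFinite.of_memQuasivariety {R S : Type*} [Ring R] [Ring S]
    (hR : IsStablyFinite R) (h : MemQuasivariety.{0} R S) : IsStablyFinite S := by
  intro d hd A B hAB
  let generic (c : Bool) : Matrix (Fin d) (Fin d) (FreeRing (Bool × Fin d × Fin d)) :=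
    .of fun i j => FreeRing.of (c, i, j)
  let X := generic true
  let Y := generic false
  let v : Bool × Fin d × Fin d → S := fun k => cond k.1 A B k.2.1 k.2.2
  have hX : (FreeRing.lift v).mapMatrix X = A := by ext; simp [X, generic, v]
  have hY : (FreeRing.lift v).mapMatrix Y = B := by ext; simp [Y, generic, v]
  have hfin : (Set.range (Function.uncurry (X * Y - 1))).Finite := Set.finite_range _
  rw [← hX, ← hY, ← forall_map_mul_sub_one_apply_eq_zero_iff] at hAB ⊢
  refine fun i j => h hfin ((Y * X - 1) i j) (fun x hx => ?_) v ?_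
  · rw [Set.forall_mem_range, Prod.forall] at hx
    refine (forall_map_mul_sub_one_apply_eq_zero_iff _ Y X).2 (hR d hd _ _ ?_) i j
    exact (forall_map_mul_sub_one_apply_eq_zero_iff _ X Y).1 hx
  · rwa [Set.forall_mem_range, Prod.forall]

theorem stably_finite_of_elementarilyEquivalent_general {G : Type*} [Monoid G] (K L : Type*)
    [Ring K] [Ring L] [Ring.CompatibleRing K] [Ring.CompatibleRing L]
    (h : K ≅[Language.ring] L) :
    IsStablyFinite (MonoidAlgebra K G) ↔ IsStablyFinite (MonoidAlgebra L G) :=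
  ⟨fun hK => hK.of_memQuasivariety (MemQuasivariety.of_elementarilyEquivalent h).monoidAlgebra,
    fun hL =>
      hL.of_memQuasivariety (MemQuasivariety.of_elementarilyEquivalent h.symm).monoidAlgebra⟩

theorem stably_finite_of_elementarilyEquivalent
    {G : Type*} [Group G] (K L : Type*) [Field K] [Field L]
    (h : letI := Ring.compatibleRingOfRing K; letI := Ring.compatibleRingOfRing L;
      K ≅[Language.ring] L) :
    IsStablyFinite (MonoidAlgebra K G) ↔ IsStablyFinite (MonoidAlgebra L G) := by
  let _ := Ring.compatibleRingOfRing K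
  let _ := Ring.compatibleRingOfRing L
  exact stably_finite_of_elementarilyEquivalent_general K L h
end

section
/- Let $G$ be a group, let $p$ be a prime, and let $K$ be the algebraic closure of the field $\mathbb{Z}/p\mathbb{Z}$. If the group ring $F[G]$ is stably finite for every finite field $F$, then the group ring $K[G]$ is stably finite. -/
/-!
Stable finiteness is a local property: a relation `A * B = 1` between matrices involves finitely
many ring elements, so it already holds over a subring containing them. For a group ring `K[G]`
these are finitely many elements with finitely many coefficients in `K`. If `K` is algebraic over
a field `k`, the coefficients generate a finite extension of `k`, which is a finite field when
`k = ℤ/p`.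
-/

theorem IsStablyFinite.of_injective {R S : Type*} [Ring R] [Ring S] (hS : IsStablyFinite S)
    (f : R →+* S) (hf : Function.Injective f) : IsStablyFinite R := by
  intro d hd A B hAB
  have hfAB : f.mapMatrix A * f.mapMatrix B = 1 := by rw [← map_mul, hAB, map_one]
  have hfBA : f.mapMatrix (B * A) = f.mapMatrix 1 := by
    rw [map_mul, hS d hd _ _ hfAB, map_one]
  exact Matrix.map_injective hf hfBA

theorem IsStablyFinite.range {R S : Type*} [Ring R] [Ring S] (hR : IsStablyFinite R)
    (f : R →+* S) (hf : Function.Injective f) : IsStablyFinite f.range :=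
  have hf' : Function.Bijective f.rangeRestrict :=
    ⟨fun _ _ hxy => hf (congrArg Subtype.val hxy), f.rangeRestrict_surjective⟩
  let e : R ≃+* f.range := .ofBijective f.rangeRestrict hf'
  hR.of_injective e.symm.toRingHom e.symm.injective

theorem isStablyFinite_of_forall_finite_subset_subring {R : Type*} [Ring R]
    (h : ∀ s : Set R, s.Finite → ∃ S : Subring R, s ⊆ S ∧ IsStablyFinite S) :
    IsStablyFinite R := by
  intro d hd A B hAB
  let entries (C : Matrix (Fin d) (Fin d) R) : Set R := ⋃ i, Set.range (C i)
  have finite_entries C : (entries C).Finite := Set.finite_iUnion fun i => Set.finite_range (C i)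
  have mem_entries C i j : C i j ∈ entries C := Set.mem_iUnion_of_mem i ⟨j, rfl⟩
  obtain ⟨S, hsub, hS⟩ := h (entries A ∪ entries B) ((finite_entries A).union (finite_entries B))
  let A' : Matrix (Fin d) (Fin d) S := .of fun i j => ⟨A i j, hsub (.inl (mem_entries A i j))⟩
  let B' : Matrix (Fin d) (Fin d) S := .of fun i j => ⟨B i j, hsub (.inr (mem_entries B i j))⟩
  have hA : S.subtype.mapMatrix A' = A := rfl
  have hB : S.subtype.mapMatrix B' = B := rfl
  have hA'B' : A' * B' = 1 := by
    apply Matrix.map_injective S.subtype_injective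
    change S.subtype.mapMatrix (A' * B') = S.subtype.mapMatrix 1
    rw [map_mul, hA, hB, hAB, map_one]
  rw [← hA, ← hB, ← map_mul, hS d hd A' B' hA'B', map_one]

theorem isStablyFinite_monoidAlgebra_of_forall_finite_subset_subring {R M : Type*} [Ring R]
    [Monoid M]
    (h : ∀ s : Set R, s.Finite → ∃ S : Subring R, s ⊆ S ∧ IsStablyFinite (MonoidAlgebra S M)) :
    IsStablyFinite (MonoidAlgebra R M) := by
  refine isStablyFinite_of_forall_finite_subset_subring fun s hs => ?_
  obtain ⟨S, hsub, hS⟩ := h (⋃ x ∈ s, Set.range x.coeff)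
    (hs.biUnion fun x _ => Finsupp.finite_range x.coeff)
  refine ⟨(MonoidAlgebra.mapRingHom M S.subtype).range, fun x hx => ?_,
    hS.range _ (MonoidAlgebra.map_injective S.subtype.toAddMonoidHom S.subtype_injective)⟩
  have hcoeff : ∀ m, x.coeff m ∈ Set.range S.subtype := fun m =>
    ⟨⟨x.coeff m, hsub (Set.mem_biUnion hx ⟨m, rfl⟩)⟩, rfl⟩
  exact (MonoidAlgebra.range_map S.subtype.toAddMonoidHom).ge hcoeff

theorem stably_finite_algebraicClosure_zmod_of_finite_fields_stably_finite_general
    {k K M : Type*} [Field k] [Field K] [Algebra k K] [Algebra.IsAlgebraic k K] [Monoid M]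
    (h : ∀ F : IntermediateField k K, FiniteDimensional k F → IsStablyFinite (MonoidAlgebra F M)) :
    IsStablyFinite (MonoidAlgebra K M) := by
  refine isStablyFinite_monoidAlgebra_of_forall_finite_subset_subring fun s hs => ?_
  have : Finite s := hs
  let F := IntermediateField.adjoin k s
  have hF : FiniteDimensional k F :=
    IntermediateField.finiteDimensional_adjoin fun x _ => Algebra.IsIntegral.isIntegral x
  exact ⟨F.toSubring, IntermediateField.subset_adjoin k s, h F hF⟩

theorem stably_finite_algebraicClosure_zmod_of_finite_fields_stably_finite
    {G : Type*} [Group G] (p : ℕ) [Fact p.Prime]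
    (h : ∀ (F : Type) [Field F] [Finite F], IsStablyFinite (MonoidAlgebra F G)) :
    IsStablyFinite (MonoidAlgebra (AlgebraicClosure (ZMod p)) G) :=
  stably_finite_algebraicClosure_zmod_of_finite_fields_stably_finite_general (k := ZMod p)
    fun F _ => have : Finite F := Module.finite_of_finite (ZMod p); h F
end
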